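/- arXiv:1710.00861 — 5 statements merged into one kernel-verified Lean document; each statement's English description precedes it below -/
import Mathlib

section
/- Let x ∈ ℝ^n and y ∈ ℝ^p be vectors, and let A ∈ ℝ^{n×k}, F ∈ ℝ^{k×l}, D ∈ ℝ^{l×p} be real matrices such that I − FᵀF is positive semidefinite. Then for every scalar ε > 0, 2·xᵀ A F D y ≤ ε⁻¹ · xᵀ A Aᵀ x + ε · yᵀ Dᵀ D y. -/
open Matrix

/-!
Moving `A` to the left, the claim is about `u = Aᵀ x`, `w = D y` and `v = F w`. Young's inequality
with weight `ε` gives `2 u ⬝ᵥ v ≤ ε⁻¹ u ⬝ᵥ u + ε v ⬝ᵥ v`, and `I - Fᵀ F ⪰ 0` says that `F` is a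
contraction, so that `v ⬝ᵥ v ≤ w ⬝ᵥ w`.
-/

section

variable {m n o : Type*} [Fintype m] [Fintype n]

theorem dotProduct_mul_mulVec [Fintype o] {R : Type*} [NonUnitalCommSemiring R] (x : m → R)
    (A : Matrix m n R) (B : Matrix n o R) (y : o → R) :
    x ⬝ᵥ ((A * B) *ᵥ y) = (Aᵀ *ᵥ x) ⬝ᵥ (B *ᵥ y) := by
  rw [← mulVec_mulVec, dotProduct_mulVec, mulVec_transpose]

theorem star_mulVec_dotProduct_mulVec_le {R : Type*} [Ring R] [PartialOrder R]
    [IsOrderedAddMonoid R] [StarRing R] [DecidableEq n] {F : Matrix m n R}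
    (hF : (1 - Fᴴ * F).PosSemidef) (w : n → R) :
    star (F *ᵥ w) ⬝ᵥ (F *ᵥ w) ≤ star w ⬝ᵥ w := by
  have quadraticForm_eq :
      star w ⬝ᵥ ((1 - Fᴴ * F) *ᵥ w) = star w ⬝ᵥ w - star (F *ᵥ w) ⬝ᵥ (F *ᵥ w) := by
    rw [sub_mulVec, one_mulVec, dotProduct_sub, ← mulVec_mulVec, dotProduct_mulVec, ← star_mulVec]
  exact sub_nonneg.mp (quadraticForm_eq ▸ hF.dotProduct_mulVec_nonneg w)

variable {K : Type*} [Field K] [LinearOrder K] [IsStrictOrderedRing K]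

theorem two_mul_dotProduct_le_inv_mul_add_mul (u v : n → K) {ε : K} (hε : 0 < ε) :
    2 * (u ⬝ᵥ v) ≤ ε⁻¹ * (u ⬝ᵥ u) + ε * (v ⬝ᵥ v) := by
  simp only [dotProduct, Finset.mul_sum, ← Finset.sum_add_distrib]
  refine Finset.sum_le_sum fun i _ ↦ ?_
  simpa only [inv_inv, sq, mul_assoc] using
    two_mul_le_add_mul_sq (a := u i) (b := v i) (inv_pos.mpr hε)

theorem stmt_0_general {k l : Type*} [Fintype k] [Fintype l] [DecidableEq l]
    [StarRing K] [TrivialStar K] (x : m → K) (y : n → K) (A : Matrix m k K) {F : Matrix k l K}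
    (D : Matrix l n K) (hF : (1 - Fᵀ * F).PosSemidef) {ε : K} (hε : 0 < ε) :
    2 * (x ⬝ᵥ ((A * F * D) *ᵥ y)) ≤
      ε⁻¹ * (x ⬝ᵥ ((A * Aᵀ) *ᵥ x)) + ε * (y ⬝ᵥ ((Dᵀ * D) *ᵥ y)) := by
  have contraction : (F *ᵥ (D *ᵥ y)) ⬝ᵥ (F *ᵥ (D *ᵥ y)) ≤ (D *ᵥ y) ⬝ᵥ (D *ᵥ y) := by
    rw [← conjTranspose_eq_transpose_of_trivial] at hF
    simpa only [star_trivial] using star_mulVec_dotProduct_mulVec_le hF (D *ᵥ y)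
  calc 2 * (x ⬝ᵥ ((A * F * D) *ᵥ y))
      = 2 * ((Aᵀ *ᵥ x) ⬝ᵥ (F *ᵥ (D *ᵥ y))) := by
        rw [Matrix.mul_assoc, dotProduct_mul_mulVec, mulVec_mulVec]
    _ ≤ ε⁻¹ * ((Aᵀ *ᵥ x) ⬝ᵥ (Aᵀ *ᵥ x)) + ε * ((F *ᵥ (D *ᵥ y)) ⬝ᵥ (F *ᵥ (D *ᵥ y))) :=
        two_mul_dotProduct_le_inv_mul_add_mul _ _ hε
    _ ≤ ε⁻¹ * ((Aᵀ *ᵥ x) ⬝ᵥ (Aᵀ *ᵥ x)) + ε * ((D *ᵥ y) ⬝ᵥ (D *ᵥ y)) := by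
        gcongr
    _ = ε⁻¹ * (x ⬝ᵥ ((A * Aᵀ) *ᵥ x)) + ε * (y ⬝ᵥ ((Dᵀ * D) *ᵥ y)) := by
        rw [dotProduct_mul_mulVec, dotProduct_mul_mulVec, transpose_transpose]

end

theorem stmt_0 (n p k l : ℕ)
    (x : Fin n → ℝ) (y : Fin p → ℝ)
    (A : Matrix (Fin n) (Fin k) ℝ) (F : Matrix (Fin k) (Fin l) ℝ)
    (D : Matrix (Fin l) (Fin p) ℝ)
    (hF : ((1 : Matrix (Fin l) (Fin l) ℝ) - Fᵀ * F).PosSemidef) :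
    ∀ ε : ℝ, 0 < ε →
      2 * (x ⬝ᵥ ((A * F * D) *ᵥ y)) ≤
        ε⁻¹ * (x ⬝ᵥ ((A * Aᵀ) *ᵥ x)) + ε * (y ⬝ᵥ ((Dᵀ * D) *ᵥ y)) :=
  fun _ hε ↦ stmt_0_general x y A D hF hε
end

section
/- Let Ξ, Ξ₁, Ξ₂ be real symmetric n×n matrices and let γ₁ ≤ γ₂ be real numbers. Then the matrix Ξ + (γ − γ₁)·Ξ₁ + (γ₂ − γ)·Ξ₂ is negative definite for every γ with γ₁ ≤ γ ≤ γ₂ if and only if both Ξ + (γ₂ − γ₁)·Ξ₁ and Ξ + (γ₂ − γ₁)·Ξ₂ are negative definite. -/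
open Matrix

/-!
The matrix depends affinely on `γ` and equals the two given matrices at `γ = γ₂` and `γ = γ₁`.
The negative definite matrices form a convex set, so the set of `γ` for which the matrix is negative
definite is convex in the line, and contains the interval as soon as it contains both endpoints.
-/

section Convex

variable {𝕜 E : Type*} [Field 𝕜] [LinearOrder 𝕜] [IsStrictOrderedRing 𝕜]
  [AddCommGroup E] [Module 𝕜 E]

theorem forall_mem_Icc_affineMap_mem_iff {s : Set E} (hs : Convex 𝕜 s) (f : 𝕜 →ᵃ[𝕜] E)
    {a b : 𝕜} (hab : a ≤ b) : (∀ t ∈ Set.Icc a b, f t ∈ s) ↔ f a ∈ s ∧ f b ∈ s where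
  mp h := ⟨h a (Set.left_mem_Icc.2 hab), h b (Set.right_mem_Icc.2 hab)⟩
  mpr h := (hs.affine_preimage f).ordConnected.out h.1 h.2

end Convex

section AffinePencil

variable {𝕜 E : Type*} [Ring 𝕜] [AddCommGroup E] [Module 𝕜 E]

/-- The affine pencil `t ↦ x + (t - a) • y + (b - t) • z` with parameter interval `[a, b]`, bundled
as an affine map so that preimages of convex sets under it are convex. -/
def affinePencil (x y z : E) (a b : 𝕜) : 𝕜 →ᵃ[𝕜] E where
  toFun t := x + (t - a) • y + (b - t) • z
  linear := LinearMap.toSpanSingleton 𝕜 E (y - z)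
  map_vadd' t u := by
    simp only [vadd_eq_add, LinearMap.toSpanSingleton_apply, add_smul, sub_smul, smul_sub]
    abel

theorem affinePencil_apply (x y z : E) (a b t : 𝕜) :
    affinePencil x y z a b t = x + (t - a) • y + (b - t) • z := rfl

theorem affinePencil_left (x y z : E) (a b : 𝕜) :
    affinePencil x y z a b a = x + (b - a) • z := by
  simp [affinePencil_apply]

theorem affinePencil_right (x y z : E) (a b : 𝕜) :
    affinePencil x y z a b b = x + (b - a) • y := by
  simp [affinePencil_apply]

end AffinePencil

section PosDef

variable {n α R : Type*} [Ring R] [PartialOrder R] [StarRing R] [AddLeftMono R]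

theorem convex_setOf_posDef [CommSemiring α] [PartialOrder α] [StarRing α]
    [StarOrderedRing α] [Algebra α R] [StarModule α R] [PosSMulStrictMono α R] :
    Convex α {M : Matrix n n R | M.PosDef} :=
  convex_iff_forall_pos.2 fun _ hM _ hN _ _ ha hb _ => (hM.smul ha).add (hN.smul hb)

variable [Field α] [LinearOrder α] [StarRing α] [StarOrderedRing α]
  [Algebra α R] [StarModule α R] [PosSMulStrictMono α R]

theorem stmt_1_general (Ξ Ξ₁ Ξ₂ : Matrix n n R) {γ₁ γ₂ : α} (hγ : γ₁ ≤ γ₂) :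
    (∀ γ ∈ Set.Icc γ₁ γ₂, (-(Ξ + (γ - γ₁) • Ξ₁ + (γ₂ - γ) • Ξ₂)).PosDef) ↔
      (-(Ξ + (γ₂ - γ₁) • Ξ₁)).PosDef ∧ (-(Ξ + (γ₂ - γ₁) • Ξ₂)).PosDef := by
  have hconvex : Convex α {M : Matrix n n R | (-M).PosDef} :=
    Convex.neg (s := {M : Matrix n n R | M.PosDef}) convex_setOf_posDef
  have hendpoints :=
    forall_mem_Icc_affineMap_mem_iff hconvex (affinePencil Ξ Ξ₁ Ξ₂ γ₁ γ₂) hγ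
  rw [affinePencil_left, affinePencil_right] at hendpoints
  exact hendpoints.trans and_comm

end PosDef

theorem stmt_1 (n : ℕ) (Ξ Ξ₁ Ξ₂ : Matrix (Fin n) (Fin n) ℝ)
    (hΞ : Ξ.IsHermitian) (hΞ₁ : Ξ₁.IsHermitian) (hΞ₂ : Ξ₂.IsHermitian)
    (γ₁ γ₂ : ℝ) (hγ : γ₁ ≤ γ₂) :
    (∀ γ : ℝ, γ₁ ≤ γ → γ ≤ γ₂ →
        (-(Ξ + (γ - γ₁) • Ξ₁ + (γ₂ - γ) • Ξ₂)).PosDef) ↔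
      ((-(Ξ + (γ₂ - γ₁) • Ξ₁)).PosDef ∧ (-(Ξ + (γ₂ - γ₁) • Ξ₂)).PosDef) := by
  simpa only [Set.mem_Icc, and_imp] using stmt_1_general Ξ Ξ₁ Ξ₂ hγ
end

section
/- Let R be a real symmetric positive definite n×n matrix, let M be a real k×n matrix, let u ∈ ℝ^k, let a ≤ b be real numbers, and let v : [a,b] → ℝ^n be a continuous function. Then −2·uᵀ M (∫ₐᵇ v(s) ds) − ∫ₐᵇ v(s)ᵀ R v(s) ds ≤ (b − a) · uᵀ M R⁻¹ Mᵀ u. -/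
open Matrix intervalIntegral

/-!
With `w = Mᵀ u`, the quadratic form of `R` is nonnegative at `v s + R⁻¹ w`. Expanding the square
gives `-2 wᵀ (v s) - (v s)ᵀ R (v s) ≤ wᵀ R⁻¹ w` for each `s`, and the right-hand side is constant
in `s`, so integrating over `s` multiplies it by the total mass.
-/

open MeasureTheory

section CompletingTheSquare

variable {n : Type*} [Fintype n] [DecidableEq n]

theorem add_inv_mulVec_dotProduct_mulVec_self {α : Type*} [CommRing α] {R : Matrix n n α}
    (hsymm : R.IsSymm) (hunit : IsUnit R) (w x : n → α) :
    (x + R⁻¹ *ᵥ w) ⬝ᵥ (R *ᵥ (x + R⁻¹ *ᵥ w)) =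
      x ⬝ᵥ (R *ᵥ x) + 2 * (w ⬝ᵥ x) + w ⬝ᵥ (R⁻¹ *ᵥ w) := by
  have hcancel : R *ᵥ (R⁻¹ *ᵥ w) = w := by
    rw [mulVec_mulVec, mul_nonsing_inv _ ((isUnit_iff_isUnit_det R).mp hunit), one_mulVec]
  have hcross : (R⁻¹ *ᵥ w) ⬝ᵥ (R *ᵥ x) = w ⬝ᵥ x := by
    rw [← dotProduct_transpose_mulVec, hsymm.eq, hcancel, dotProduct_comm]
  rw [mulVec_add, hcancel, add_dotProduct, dotProduct_add, dotProduct_add, hcross,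
    dotProduct_comm x w, dotProduct_comm _ w]
  ring

theorem neg_two_mul_dotProduct_sub_le {R : Matrix n n ℝ} (hR : R.PosDef) (w x : n → ℝ) :
    -2 * (w ⬝ᵥ x) - x ⬝ᵥ (R *ᵥ x) ≤ w ⬝ᵥ (R⁻¹ *ᵥ w) := by
  have hsquare := add_inv_mulVec_dotProduct_mulVec_self
    (isHermitian_iff_isSymm.mp hR.isHermitian) hR.isUnit w x
  have hnonneg := hR.posSemidef.dotProduct_mulVec_nonneg (x + R⁻¹ *ᵥ w)
  rw [star_trivial] at hnonneg
  linarith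

end CompletingTheSquare

section Integral

variable {Ω n : Type*} [MeasurableSpace Ω] {μ : Measure Ω} [Fintype n]

theorem integrable_const_dotProduct {𝕜 : Type*} [RCLike 𝕜] (w : n → 𝕜) {v : Ω → n → 𝕜}
    (hv : Integrable v μ) : Integrable (fun s ↦ w ⬝ᵥ v s) μ :=
  (dotProductBilin 𝕜 𝕜 w).toContinuousLinearMap.integrable_comp hv

theorem integral_const_dotProduct {𝕜 : Type*} [RCLike 𝕜] (w : n → 𝕜) {v : Ω → n → 𝕜}
    (hv : Integrable v μ) : ∫ s, w ⬝ᵥ v s ∂μ = w ⬝ᵥ ∫ s, v s ∂μ :=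
  (dotProductBilin 𝕜 𝕜 w).toContinuousLinearMap.integral_comp_comm hv

theorem neg_two_mul_dotProduct_integral_sub_le [DecidableEq n] [IsFiniteMeasure μ]
    {R : Matrix n n ℝ} (hR : R.PosDef) (w : n → ℝ) {v : Ω → n → ℝ} (hv : Integrable v μ)
    (hRv : Integrable (fun s ↦ v s ⬝ᵥ (R *ᵥ v s)) μ) :
    -2 * (w ⬝ᵥ ∫ s, v s ∂μ) - ∫ s, v s ⬝ᵥ (R *ᵥ v s) ∂μ ≤
      μ.real Set.univ * (w ⬝ᵥ (R⁻¹ *ᵥ w)) := by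
  have hwv : Integrable (fun s ↦ -2 * (w ⬝ᵥ v s)) μ :=
    (integrable_const_dotProduct w hv).const_mul (-2)
  calc -2 * (w ⬝ᵥ ∫ s, v s ∂μ) - ∫ s, v s ⬝ᵥ (R *ᵥ v s) ∂μ
      = ∫ s, (-2 * (w ⬝ᵥ v s) - v s ⬝ᵥ (R *ᵥ v s)) ∂μ := by
        rw [MeasureTheory.integral_sub hwv hRv, MeasureTheory.integral_const_mul,
          integral_const_dotProduct w hv]
    _ ≤ ∫ _, w ⬝ᵥ (R⁻¹ *ᵥ w) ∂μ :=
        MeasureTheory.integral_mono (hwv.sub hRv) (integrable_const _)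
          fun s ↦ neg_two_mul_dotProduct_sub_le hR w (v s)
    _ = μ.real Set.univ * (w ⬝ᵥ (R⁻¹ *ᵥ w)) := by
        rw [MeasureTheory.integral_const, smul_eq_mul]

theorem stmt_4_general {k : Type*} [Fintype k] [DecidableEq n] [IsFiniteMeasure μ]
    {R : Matrix n n ℝ} (hR : R.PosDef) (M : Matrix k n ℝ) (u : k → ℝ) {v : Ω → n → ℝ}
    (hv : Integrable v μ) (hRv : Integrable (fun s ↦ v s ⬝ᵥ (R *ᵥ v s)) μ) :
    -2 * (u ⬝ᵥ (M *ᵥ ∫ s, v s ∂μ)) - ∫ s, v s ⬝ᵥ (R *ᵥ v s) ∂μ ≤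
      μ.real Set.univ * (u ⬝ᵥ ((M * R⁻¹ * Mᵀ) *ᵥ u)) := by
  simpa only [← mulVec_mulVec, dotProduct_mulVec u M, mulVec_transpose] using
    neg_two_mul_dotProduct_integral_sub_le hR (Mᵀ *ᵥ u) hv hRv

end Integral

theorem stmt_4 (n k : ℕ) (R : Matrix (Fin n) (Fin n) ℝ) (hR : R.PosDef)
    (M : Matrix (Fin k) (Fin n) ℝ) (u : Fin k → ℝ)
    (a b : ℝ) (hab : a ≤ b) (v : ℝ → Fin n → ℝ)
    (hv : ContinuousOn v (Set.Icc a b)) :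
    -2 * (u ⬝ᵥ (M *ᵥ ∫ s in a..b, v s)) - (∫ s in a..b, v s ⬝ᵥ (R *ᵥ v s)) ≤
      (b - a) * (u ⬝ᵥ ((M * R⁻¹ * Mᵀ) *ᵥ u)) := by
  have hRv : ContinuousOn (fun s ↦ v s ⬝ᵥ (R *ᵥ v s)) (Set.Icc a b) := by fun_prop
  simpa only [integral_of_le hab, measureReal_restrict_apply_univ,
    Real.volume_real_Ioc_of_le hab] using
    stmt_4_general (μ := volume.restrict (Set.Ioc a b)) hR M u
      (hv.intervalIntegrable_of_Icc hab).1 (hRv.intervalIntegrable_of_Icc hab).1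
end

section
/- Let ϱ > 0 and let V : [0,∞) → ℝ be a differentiable nonnegative function satisfying V′(t) ≤ −ϱ·√(V(t)) for all t ≥ 0. Then V(t) = 0 for every t ≥ t⋆, where t⋆ = 2·√(V(0))/ϱ. -/
/-!
While `V` is positive, `V' ≤ -c V ^ α` says that `V ^ (1 - α)` decreases at rate at least
`(1 - α) c`, so `V` cannot remain positive up to time `V 0 ^ (1 - α) / ((1 - α) c)`. Once `V` is
nonpositive it stays so, since it can cross no level `ε > 0` upwards.
-/

open Set

section RightDerivative

variable {V V' : ℝ → ℝ} {a b : ℝ}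

theorem nonpos_of_deriv_right_neg_of_pos (hcont : ContinuousOn V (Icc a b))
    (hderiv : ∀ x ∈ Ico a b, HasDerivWithinAt V (V' x) (Ici x) x)
    (hneg : ∀ x ∈ Ico a b, 0 < V x → V' x < 0) (ha : V a ≤ 0) {x : ℝ} (hx : x ∈ Icc a b) :
    V x ≤ 0 := by
  refine le_of_forall_gt_imp_ge_of_dense fun ε hε ↦ ?_
  exact image_le_of_deriv_right_lt_deriv_boundary hcont hderiv (ha.trans hε.le)
    (fun y ↦ hasDerivAt_const y ε) (fun y hy hVy ↦ hneg y hy (hVy ▸ hε)) hx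

theorem rpow_one_sub_le_of_deriv_right_le_neg_mul_rpow {c α : ℝ} (hα : α ≤ 1)
    (hcont : ContinuousOn V (Icc a b))
    (hderiv : ∀ x ∈ Ico a b, HasDerivWithinAt V (V' x) (Ici x) x)
    (hpos : ∀ x ∈ Icc a b, 0 < V x) (hdecay : ∀ x ∈ Ico a b, V' x ≤ -c * V x ^ α)
    {x : ℝ} (hx : x ∈ Icc a b) :
    V x ^ (1 - α) ≤ V a ^ (1 - α) - (1 - α) * c * (x - a) := by
  have hpos' : ∀ y ∈ Ico a b, 0 < V y := fun y hy ↦ hpos y (Ico_subset_Icc_self hy)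
  have hline (y : ℝ) : HasDerivAt (fun z ↦ V a ^ (1 - α) - (1 - α) * c * (z - a))
      (-((1 - α) * c)) y := by
    simpa using (((hasDerivAt_id y).sub_const a).const_mul ((1 - α) * c)).const_sub
      (V a ^ (1 - α))
  refine image_le_of_deriv_right_le_deriv_boundary
    (hcont.rpow_const fun y hy ↦ .inl (hpos y hy).ne')
    (fun y hy ↦ (hderiv y hy).rpow_const (.inl (hpos' y hy).ne')) (by simp)
    (fun y _ ↦ (hline y).continuousAt.continuousWithinAt)
    (fun y _ ↦ (hline y).hasDerivWithinAt) (fun y hy ↦ ?_) hx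
  have hcancel : V y ^ α * V y ^ (1 - α - 1) = 1 := by
    rw [← Real.rpow_add (hpos' y hy)]
    simp
  have hfactor : 0 ≤ (1 - α) * V y ^ (1 - α - 1) :=
    mul_nonneg (sub_nonneg.2 hα) (Real.rpow_nonneg (hpos' y hy).le _)
  calc V' y * (1 - α) * V y ^ (1 - α - 1)
      = V' y * ((1 - α) * V y ^ (1 - α - 1)) := mul_assoc _ _ _
    _ ≤ -c * V y ^ α * ((1 - α) * V y ^ (1 - α - 1)) :=
      mul_le_mul_of_nonneg_right (hdecay y hy) hfactor
    _ = -((1 - α) * c) * (V y ^ α * V y ^ (1 - α - 1)) := by ring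
    _ = -((1 - α) * c) := by rw [hcancel, mul_one]

end RightDerivative

theorem stmt_7_general {c α : ℝ} (hc : 0 < c) (hα : α < 1) {V V' : ℝ → ℝ}
    (hcont : ContinuousOn V (Ici 0))
    (hderiv : ∀ t, 0 ≤ t → HasDerivWithinAt V (V' t) (Ici t) t) (hV0 : 0 ≤ V 0)
    (hdecay : ∀ t, 0 ≤ t → 0 < V t → V' t ≤ -c * V t ^ α)
    {t : ℝ} (ht : V 0 ^ (1 - α) / ((1 - α) * c) ≤ t) : V t ≤ 0 := by
  have hrate : 0 < (1 - α) * c := mul_pos (sub_pos.2 hα) hc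
  have ht0 : 0 ≤ t := (by positivity : 0 ≤ V 0 ^ (1 - α) / ((1 - α) * c)).trans ht
  by_contra! hVt
  have hneg (s : ℝ) (hs : 0 ≤ s) (hVs : 0 < V s) : V' s < 0 :=
    (hdecay s hs hVs).trans_lt
      (mul_neg_of_neg_of_pos (neg_lt_zero.2 hc) (Real.rpow_pos_of_pos hVs α))
  have hpos : ∀ s ∈ Icc 0 t, 0 < V s := by
    intro s hs
    by_contra! hVs
    exact hVt.not_ge (nonpos_of_deriv_right_neg_of_pos
      (hcont.mono fun r hr ↦ hs.1.trans hr.1) (fun r hr ↦ hderiv r (hs.1.trans hr.1))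
      (fun r hr ↦ hneg r (hs.1.trans hr.1)) hVs (right_mem_Icc.2 hs.2))
  have hbound : V t ^ (1 - α) ≤ V 0 ^ (1 - α) - (1 - α) * c * (t - 0) :=
    rpow_one_sub_le_of_deriv_right_le_neg_mul_rpow hα.le (hcont.mono Icc_subset_Ici_self)
      (fun s hs ↦ hderiv s hs.1) hpos
      (fun s hs ↦ hdecay s hs.1 (hpos s (Ico_subset_Icc_self hs))) (right_mem_Icc.2 ht0)
  rw [div_le_iff₀' hrate] at ht
  linarith [Real.rpow_pos_of_pos hVt (1 - α)]

theorem stmt_7 (ϱ : ℝ) (hϱ : 0 < ϱ) (V : ℝ → ℝ)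
    (hdiff : ∀ t : ℝ, 0 ≤ t → DifferentiableAt ℝ V t)
    (hnonneg : ∀ t : ℝ, 0 ≤ t → 0 ≤ V t)
    (hineq : ∀ t : ℝ, 0 ≤ t → deriv V t ≤ -ϱ * Real.sqrt (V t)) :
    ∀ t : ℝ, 2 * Real.sqrt (V 0) / ϱ ≤ t → V t = 0 := by
  intro t ht
  have htime : V 0 ^ (1 - 1 / 2 : ℝ) / ((1 - 1 / 2) * ϱ) = 2 * √(V 0) / ϱ := by
    rw [sub_half, ← Real.sqrt_eq_rpow]
    field_simp
  refine le_antisymm ?_ (hnonneg t ((by positivity : 0 ≤ 2 * √(V 0) / ϱ).trans ht))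
  exact stmt_7_general hϱ one_half_lt_one
    (fun s hs ↦ (hdiff s hs).continuousAt.continuousWithinAt)
    (fun s hs ↦ (hdiff s hs).hasDerivAt.hasDerivWithinAt) (hnonneg 0 le_rfl)
    (fun s hs _ ↦ Real.sqrt_eq_rpow (V s) ▸ hineq s hs) (htime.trans_le ht)
end

section
/- Let ℓ be a finite index set and i ∈ ℓ. Let K ⊆ ℓ \ {i} be nonempty with α = |K| elements, and let U = ℓ \ ({i} ∪ K). Let λ : ℓ → ℝ satisfy λ(j) ≥ 0 for all j ≠ i and ∑_{j ∈ ℓ} λ(j) = 0. Let Q : ℓ → real symmetric n×n matrices, and let W and Q̄ be real symmetric n×n matrices. Assume: (a) Q(i) ⪰ W; (b) for every j ∈ K, λ(j)·(Q(j) − W) ≺ (1/α)·Q̄; and (c) for every j ∈ U, Q(j) ⪯ W. Then ∑_{j ∈ ℓ} λ(j)·Q(j) ⪯ Q̄. -/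
open Matrix

/-!
Since the weights sum to zero, each `Q j` may be replaced by `Q j - W` without changing the weighted
sum. The terms over `K` are then at most `Qbar` in total, each being at most an equal share of it,
and every other term is nonpositive: the diagonal weight is nonpositive while `W ≤ Q i`, and the
remaining weights are nonnegative while `Q j ≤ W`. This is an argument in ordered modules,
and the Loewner order makes matrices one.
-/

theorem sum_smul_sub_const_of_sum_eq_zero {ι R M : Type*} [Ring R] [AddCommGroup M] [Module R M]
    {s : Finset ι} {c : ι → R} (hc : ∑ j ∈ s, c j = 0) (x : ι → M) (w : M) :
    ∑ j ∈ s, c j • (x j - w) = ∑ j ∈ s, c j • x j := by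
  simp only [smul_sub, Finset.sum_sub_distrib, ← Finset.sum_smul, hc, zero_smul, sub_zero]

theorem nonpos_of_sum_eq_zero_of_forall_ne_nonneg {ι M : Type*} [AddCommGroup M] [PartialOrder M]
    [IsOrderedAddMonoid M] {s : Finset ι} {f : ι → M} {i : ι} (hi : i ∈ s)
    (hf : ∀ j ∈ s, j ≠ i → 0 ≤ f j) (hsum : ∑ j ∈ s, f j = 0) : f i ≤ 0 := by
  classical
  rw [eq_neg_of_add_eq_zero_left ((Finset.add_sum_erase s f hi).trans hsum), neg_nonpos]
  exact Finset.sum_nonneg fun j hj =>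
    hf j (Finset.mem_of_mem_erase hj) (Finset.ne_of_mem_erase hj)

theorem sum_le_of_forall_le_one_div_card_smul {ι 𝕜 E : Type*} [DivisionRing 𝕜] [CharZero 𝕜]
    [AddCommGroup E] [PartialOrder E] [IsOrderedAddMonoid E] [Module 𝕜 E]
    {s : Finset ι} (hs : s.Nonempty) {f : ι → E} {y : E}
    (hf : ∀ j ∈ s, f j ≤ (1 / (s.card : 𝕜)) • y) : ∑ j ∈ s, f j ≤ y := by
  have hcard : (s.card : 𝕜) ≠ 0 := Nat.cast_ne_zero.mpr hs.card_ne_zero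
  calc ∑ j ∈ s, f j ≤ s.card • (1 / (s.card : 𝕜)) • y := Finset.sum_le_card_nsmul s f _ hf
    _ = y := by
      rw [← Nat.cast_smul_eq_nsmul 𝕜, smul_smul, mul_one_div_cancel hcard, one_smul]

theorem stmt_11_general {ι 𝕜 E : Type*} [Fintype ι]
    [DivisionRing 𝕜] [PartialOrder 𝕜] [IsStrictOrderedRing 𝕜]
    [AddCommGroup E] [PartialOrder E] [IsOrderedAddMonoid E] [Module 𝕜 E] [PosSMulMono 𝕜 E]
    {i : ι} {K : Finset ι} (hK : K.Nonempty) {lam : ι → 𝕜}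
    (hlam : ∀ j, j ≠ i → 0 ≤ lam j) (hsum : ∑ j, lam j = 0) {Q : ι → E} {W Qbar : E}
    (hi : W ≤ Q i) (hknown : ∀ j ∈ K, lam j • (Q j - W) ≤ (1 / (K.card : 𝕜)) • Qbar)
    (hunknown : ∀ j, j ≠ i → j ∉ K → Q j ≤ W) :
    ∑ j, lam j • Q j ≤ Qbar := by
  classical
  have hlam_i : lam i ≤ 0 :=
    nonpos_of_sum_eq_zero_of_forall_ne_nonneg (Finset.mem_univ i) (fun j _ => hlam j) hsum
  have hcompl : ∀ j ∈ Kᶜ, lam j • (Q j - W) ≤ 0 := by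
    intro j hj
    obtain rfl | hji := eq_or_ne j i
    · exact smul_nonpos_of_nonpos_of_nonneg hlam_i (sub_nonneg.mpr hi)
    · exact smul_nonpos_of_nonneg_of_nonpos (hlam j hji)
        (sub_nonpos.mpr (hunknown j hji (Finset.mem_compl.mp hj)))
  calc ∑ j, lam j • Q j = ∑ j, lam j • (Q j - W) :=
        (sum_smul_sub_const_of_sum_eq_zero hsum Q W).symm
    _ = ∑ j ∈ K, lam j • (Q j - W) + ∑ j ∈ Kᶜ, lam j • (Q j - W) :=
        (Finset.sum_add_sum_compl K _).symm
    _ ≤ Qbar + 0 :=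
        add_le_add (sum_le_of_forall_le_one_div_card_smul hK hknown) (Finset.sum_nonpos hcompl)
    _ = Qbar := add_zero Qbar

theorem stmt_11 (ι : Type*) [Fintype ι] [DecidableEq ι] (n : ℕ)
    (i : ι) (K : Finset ι) (hKne : K.Nonempty) (hiK : i ∉ K)
    (α : ℕ) (hα : α = K.card)
    (U : Finset ι) (hU : U = Finset.univ \ insert i K)
    (lam : ι → ℝ)
    (hlam : ∀ j : ι, j ≠ i → 0 ≤ lam j) (hsum : ∑ j, lam j = 0)
    (Q : ι → Matrix (Fin n) (Fin n) ℝ) (hQ : ∀ j, (Q j).IsHermitian)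
    (W Qbar : Matrix (Fin n) (Fin n) ℝ)
    (hW : W.IsHermitian) (hQbar : Qbar.IsHermitian)
    (ha : (Q i - W).PosSemidef)
    (hb : ∀ j ∈ K, ((1 / (α : ℝ)) • Qbar - lam j • (Q j - W)).PosDef)
    (hc : ∀ j ∈ U, (W - Q j).PosSemidef) :
    (Qbar - ∑ j, lam j • Q j).PosSemidef := by
  subst hα hU
  open scoped MatrixOrder in
  exact le_iff.mp <| stmt_11_general hKne hlam hsum (le_iff.mpr ha)
    (fun j hj => le_iff.mpr (hb j hj).posSemidef)
    (fun j hji hjK => le_iff.mpr (hc j (by simp [hji, hjK])))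
end
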